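/- arXiv:2207.00825 — 2 statements merged into one kernel-verified Lean document; each statement's English description precedes it below -/
import Mathlib

section
/- Assume Chowla's conjecture on least primes in arithmetic progressions: for every ε > 0 there exists a constant C_ε > 0 such that for all coprime positive integers a and d, the least prime p with p ≡ a (mod d) satisfies p ≤ C_ε·d^{1+ε}. Suppose the discriminant satisfies Δᵤ ≠ 1. Then for every ε > 0 there exist constants c > 0 and x₀ > 0 (depending on a₁, a₂, ε) such that for all x ≥ x₀, G(x) := max{g_u(p−1) : p ≤ x, p prime} satisfies G(x) ≥ c·x^{1−ε}. -/
open scoped BigOperators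

/-- `gu u n = gcd(n, u n)`. -/
noncomputable def gu (u : ℕ → ℤ) (n : ℕ) : ℕ := Int.gcd (n : ℤ) (u n)

/-- Rank of appearance of `m` in the sequence `u`. -/
noncomputable def zu (u : ℕ → ℤ) (m : ℕ) : ℕ := sInf {n : ℕ | 0 < n ∧ (m : ℤ) ∣ u n}

/-- `ℓ(m) = lcm(m, z_u(m))`. -/
noncomputable def ellu (u : ℕ → ℤ) (m : ℕ) : ℕ := Nat.lcm m (zu u m)

/-- The arithmetic function `ρ_λ`. -/
noncomputable def rho (lam n : ℕ) : ℝ :=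
  (Nat.factorial lam : ℝ) *
    ∑ f ∈ (Fintype.piFinset fun _ : n.primeFactors => Finset.range (lam + 1)) |>.filter
        (fun f => ∑ p, f p = lam),
      ∏ p : n.primeFactors,
        (((n.factorization (p : ℕ) : ℝ) ^ f p - ((n.factorization (p : ℕ) : ℝ) - 1) ^ f p) *
          Real.log ((p : ℕ) : ℝ) ^ f p / (Nat.factorial (f p) : ℝ))

/-- The set of primes `≤ x`. -/
noncomputable def primesUpTo (x : ℝ) : Finset ℕ :=
  (Finset.range (⌊x⌋₊ + 1)).filter Nat.Prime

/-- `π(x)`, the number of primes `≤ x`. -/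
noncomputable def primePi (x : ℝ) : ℕ := (primesUpTo x).card

/-- `π(x; b, a)`, the number of primes `p ≤ x` with `p ≡ a (mod b)`. -/
noncomputable def primePiMod (x : ℝ) (b a : ℕ) : ℕ :=
  ((primesUpTo x).filter fun p => p % b = a % b).card

/-- `Δ(x; b, a) = π(x; b, a) - π(x)/φ(b)`. -/
noncomputable def chebErr (x : ℝ) (b a : ℕ) : ℝ :=
  (primePiMod x b a : ℝ) - (primePi x : ℝ) / (Nat.totient b : ℝ)

/-- The Lucas sequence with parameters `a`, `b`. -/
def luc (a b : ℤ) : ℕ → ℤ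
  | 0 => 0
  | 1 => 1
  | (n + 2) => a * luc a b (n + 1) + b * luc a b n

lemma luc_rec (a b : ℤ) (n : ℕ) : luc a b (n + 2) = a * luc a b (n + 1) + b * luc a b n := rfl

lemma luc_unique (a b : ℤ) (u : ℕ → ℤ) (h0 : u 0 = 0)
    (hrec : ∀ n : ℕ, u (n + 2) = a * u (n + 1) + b * u n) (n : ℕ) :
    u n = u 1 * luc a b n ∧ u (n + 1) = u 1 * luc a b (n + 1) := by
  induction n with
  | zero => simp [luc, h0]
  | succ k ih =>
    refine ⟨ih.2, ?_⟩
    rw [hrec, luc_rec, ih.1, ih.2]; ring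

lemma luc_add (a b : ℤ) (j m : ℕ) :
    luc a b (j + m) = luc a b j * luc a b (m + 1) + luc a b (j + 1) * luc a b m
      - a * luc a b j * luc a b m ∧
    luc a b (j + m + 1) = luc a b (j + 1) * luc a b (m + 1) + b * luc a b j * luc a b m := by
  induction m with
  | zero => simp [luc]
  | succ k ih =>
    refine ⟨?_, ?_⟩
    · rw [← add_assoc, ih.2, luc_rec]; ring
    · have : j + (k + 1) + 1 = (j + k) + 2 := by ring
      rw [this, luc_rec, ih.1, ih.2, luc_rec]; ring

lemma luc_cassini (a b : ℤ) (m : ℕ) :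
    luc a b (m + 1) ^ 2 - a * luc a b m * luc a b (m + 1) - b * luc a b m ^ 2 = (-b) ^ m := by
  induction m with
  | zero => simp [luc]
  | succ k ih =>
    rw [pow_succ (-b) k, ← ih, luc_rec]; ring

lemma luc_mul (a b : ℤ) (m n : ℕ) :
    luc a b (m * n) = luc a b m *
      luc (2 * luc a b (m + 1) - a * luc a b m) (-(-b) ^ m) n := by
  have h := luc_unique (2 * luc a b (m + 1) - a * luc a b m) (-(-b) ^ m)
    (fun n => luc a b (m * n)) (by simp [luc]) (by
      intro n
      have e1 := luc_add a b (m * n) m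
      have e2 := luc_add a b (m * n + m) m
      have h1 : m * (n + 2) = m * n + m + m := by ring
      have h2 : m * (n + 1) = m * n + m := by ring
      simp only [h1, h2]
      rw [e2.1, e1.2, e1.1, ← luc_cassini]; ring) n
  simpa using h.1

lemma luc_two_pow (a b p : ℤ) (hp : p ∣ a ^ 2 + 4 * b) (n : ℕ) :
    p ∣ 2 ^ n * luc a b (n + 1) - (n + 1) * a ^ n ∧
    p ∣ 2 ^ (n + 1) * luc a b (n + 2) - (n + 2) * a ^ (n + 1) := by
  induction n with
  | zero => simp [luc]
  | succ k ih =>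
    refine ⟨?_, ?_⟩
    · convert ih.2 using 2
      push_cast; ring
    · have := dvd_add (dvd_add (ih.2.mul_left (2 * a)) (ih.1.mul_left (4 * b)))
        (hp.mul_left ((k + 1) * a ^ k))
      have e : (2 : ℤ) ^ (k + 1 + 1) * luc a b (k + 1 + 2)
          - (((k + 1 : ℕ) : ℤ) + 2) * a ^ (k + 1 + 1) =
          2 * a * (2 ^ (k + 1) * luc a b (k + 2) - (k + 2) * a ^ (k + 1)) +
          4 * b * (2 ^ k * luc a b (k + 1) - (k + 1) * a ^ k) +
          (k + 1) * a ^ k * (a ^ 2 + 4 * b) - 0 := by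
        rw [luc_rec]; push_cast; ring
      rw [e, sub_zero]; exact this

lemma luc_prime (a b : ℤ) (p : ℕ) (hpp : p.Prime) (hp : (p : ℤ) ∣ a ^ 2 + 4 * b) :
    (p : ℤ) ∣ luc a b p := by
  rcases hpp.eq_two_or_odd' with rfl | hodd
  · have h : (2 : ℤ) ∣ a ^ 2 := by
      have := dvd_sub hp (Dvd.intro (2 * b) (by ring) : ((2 : ℕ) : ℤ) ∣ 4 * b)
      simpa using this
    have := Int.prime_two.dvd_of_dvd_pow h
    simpa [luc] using this
  · obtain ⟨n, rfl⟩ : ∃ n, p = n + 1 := ⟨p - 1, by have := hpp.pos; omega⟩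
    have h := (luc_two_pow a b _ hp n).1
    have h2 : ((n + 1 : ℕ) : ℤ) ∣ 2 ^ n * luc a b (n + 1) := by
      have h3 : ((n + 1 : ℕ) : ℤ) ∣ (n + 1) * a ^ n := by
        push_cast; exact dvd_mul_right _ _
      have := dvd_add h h3
      simpa using this
    refine IsCoprime.dvd_of_dvd_mul_left ?_ h2
    apply IsCoprime.pow_right
    exact Nat.isCoprime_iff_coprime.mpr (Nat.coprime_two_right.mpr hodd)

lemma luc_prime_pow (p : ℕ) (hpp : p.Prime) (k : ℕ) : ∀ (a b : ℤ),
    (p : ℤ) ∣ a ^ 2 + 4 * b → ((p ^ k : ℕ) : ℤ) ∣ luc a b (p ^ k) := by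
  induction k with
  | zero => intro a b _; simp
  | succ k ih =>
    intro a b h
    rw [pow_succ', luc_mul]
    push_cast
    refine mul_dvd_mul (luc_prime a b p hpp h) ?_
    have := ih (2 * luc a b (p + 1) - a * luc a b p) (-(-b) ^ p) (by
      rw [← luc_cassini]
      have e := h.mul_right (luc a b p ^ 2)
      ring_nf at e ⊢
      exact e)
    simpa using this

lemma exists_prime_dvd_disc (a b : ℤ) (h1 : a ^ 2 + 4 * b ≠ 1) :
    ∃ p : ℕ, p.Prime ∧ (p : ℤ) ∣ a ^ 2 + 4 * b := by
  have h2 : (a ^ 2 + 4 * b).natAbs ≠ 1 := by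
    intro h
    rcases Int.natAbs_eq_iff.mp h with h | h
    · exact h1 (by simpa using h)
    · rcases Int.even_or_odd' a with ⟨c, rfl | rfl⟩
      · ring_nf at h; omega
      · ring_nf at h; omega
  obtain ⟨p, hp, hd⟩ := Nat.exists_prime_and_dvd h2
  exact ⟨p, hp, Int.natCast_dvd.mpr hd⟩

/-- Assume Chowla's conjecture: for every `ε > 0` there is `C_ε > 0` such
that for all coprime positive integers `a, d` the least prime `p ≡ a (mod d)` satisfies
`p ≤ C_ε·d^{1+ε}`. If `Δᵤ ≠ 1`, then for every `ε > 0` there are `c, x₀ > 0` such that for all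
`x ≥ x₀` some prime `p ≤ x` satisfies `g_u(p−1) ≥ c·x^{1−ε}`. -/
theorem statement11 (a₁ a₂ : ℤ) (hcop : IsCoprime a₁ a₂) (ha₂ : a₂ ≠ 0)
    (hΔ : a₁ ^ 2 + 4 * a₂ ≠ 0)
    (u : ℕ → ℤ) (hu0 : u 0 = 0) (hu1 : u 1 = 1)
    (hrec : ∀ n : ℕ, u (n + 2) = a₁ * u (n + 1) + a₂ * u n)
    (hnd : ∀ α β : ℂ, α ^ 2 = (a₁ : ℂ) * α + (a₂ : ℂ) →
      β ^ 2 = (a₁ : ℂ) * β + (a₂ : ℂ) → α ≠ β → ∀ k : ℕ, 0 < k → (α / β) ^ k ≠ 1)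
    (hChowla : ∀ ε : ℝ, 0 < ε → ∃ C : ℝ, 0 < C ∧
      ∀ a d : ℕ, 0 < a → 0 < d → Nat.Coprime a d →
        ∃ q : ℕ, q.Prime ∧ q % d = a % d ∧ (q : ℝ) ≤ C * (d : ℝ) ^ (1 + ε))
    (hΔ1 : a₁ ^ 2 + 4 * a₂ ≠ 1) :
    ∀ ε : ℝ, 0 < ε → ∃ c x₀ : ℝ, 0 < c ∧ 0 < x₀ ∧ ∀ x : ℝ, x₀ ≤ x →
      ∃ q : ℕ, q.Prime ∧ (q : ℝ) ≤ x ∧ c * x ^ (1 - ε) ≤ (gu u (q - 1) : ℝ) := by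
  intro ε hε
  obtain ⟨C, hC, hCh⟩ := hChowla ε hε
  obtain ⟨p, hp, hpd⟩ := exists_prime_dvd_disc a₁ a₂ hΔ1
  have hul : ∀ n, u n = luc a₁ a₂ n := fun n => by
    simpa [hu1] using (luc_unique a₁ a₂ u hu0 hrec n).1
  have hp1 : (1 : ℝ) < p := by exact_mod_cast hp.one_lt
  have hp0 : (0 : ℝ) < p := by linarith
  have h1ε : 0 < 1 + ε := by linarith
  have hD : 0 < C ^ (1 + ε)⁻¹ := Real.rpow_pos_of_pos hC _
  refine ⟨(C ^ (1 + ε)⁻¹ * p)⁻¹, max 1 C, by positivity, by positivity, fun x hx => ?_⟩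
  have hx1 : 1 ≤ x := le_trans (le_max_left _ _) hx
  have hxC : C ≤ x := le_trans (le_max_right _ _) hx
  have hx0 : 0 < x := by linarith
  have hy : 1 ≤ (x / C) ^ (1 + ε)⁻¹ :=
    Real.one_le_rpow ((one_le_div hC).mpr hxC) (by positivity)
  obtain ⟨k, hk1, hk2⟩ := exists_nat_pow_near hy hp1
  have hpk : 0 < p ^ k := pow_pos hp.pos k
  obtain ⟨q, hq, hqm, hqle⟩ := hCh 1 (p ^ k) one_pos hpk (Nat.coprime_one_left _)
  refine ⟨q, hq, hqle.trans ?_, ?_⟩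
  · have : ((p ^ k : ℕ) : ℝ) ^ (1 + ε) ≤ x / C := by
      calc ((p ^ k : ℕ) : ℝ) ^ (1 + ε) ≤ ((x / C) ^ (1 + ε)⁻¹) ^ (1 + ε) := by
            push_cast
            exact Real.rpow_le_rpow (by positivity) hk1 h1ε.le
        _ = x / C := Real.rpow_inv_rpow (by positivity) h1ε.ne'
    calc C * ((p ^ k : ℕ) : ℝ) ^ (1 + ε) ≤ C * (x / C) := by gcongr
      _ = x := by field_simp
  · have hdq : p ^ k ∣ q - 1 := (Nat.modEq_iff_dvd' hq.one_lt.le).mp (Eq.symm hqm)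
    have hdu : ((p ^ k : ℕ) : ℤ) ∣ u (q - 1) := by
      obtain ⟨n, hn⟩ := hdq
      rw [hul, hn, luc_mul]
      exact (luc_prime_pow p hp k a₁ a₂ hpd).mul_right _
    have hdg : p ^ k ∣ gu u (q - 1) :=
      Int.dvd_gcd (by exact_mod_cast hdq) hdu
    have hgpos : 0 < gu u (q - 1) := by
      apply Int.gcd_pos_of_ne_zero_left
      have := hq.one_lt
      omega
    have hle : ((p : ℝ) ^ k) ≤ (gu u (q - 1) : ℝ) := by
      exact_mod_cast Nat.le_of_dvd hgpos hdg
    refine le_trans ?_ hle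
    have hexp : 1 - ε ≤ (1 + ε)⁻¹ := by
      rw [← one_div, le_div_iff₀ h1ε]; nlinarith
    have h5 : x ^ (1 - ε) ≤ x ^ (1 + ε)⁻¹ := Real.rpow_le_rpow_of_exponent_le hx1 hexp
    rw [Real.div_rpow hx0.le hC.le, div_lt_iff₀ hD] at hk2
    rw [inv_mul_le_iff₀ (by positivity)]
    calc x ^ (1 - ε) ≤ x ^ (1 + ε)⁻¹ := h5
      _ ≤ (p : ℝ) ^ (k + 1) * C ^ (1 + ε)⁻¹ := hk2.le
      _ = _ := by ring
end

section
/- For every positive integer λ and every real x > 0, Σ_{p ≤ x, p prime} (log g_u(p−1))^λ = Σ_{d ≤ x, gcd(d, a₂) = 1} ρ_λ(d)·π(x; ℓ(d), 1), where the right-hand sum is over positive integers d ≤ x coprime to a₂. -/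
open scoped BigOperators

/-- The power series `exp(aT)`. -/
noncomputable def expS (a : ℝ) : PowerSeries ℝ := PowerSeries.rescale a (PowerSeries.exp ℝ)

lemma expS_add (a b : ℝ) : expS (a + b) = expS a * expS b :=
  (PowerSeries.exp_mul_exp_eq_exp_add a b).symm

lemma expS_zero : expS 0 = 1 := by
  simp [expS]

lemma coeff_expS (a : ℝ) (k : ℕ) : PowerSeries.coeff k (expS a) = a ^ k / (k.factorial : ℝ) := by
  simp [expS, PowerSeries.coeff_rescale, PowerSeries.coeff_exp, div_eq_mul_inv]

/-- Local factor of the generating function of `rho`. -/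
noncomputable def locF (p h : ℕ) : PowerSeries ℝ :=
  expS ((h : ℝ) * Real.log p) - expS (((h : ℝ) - 1) * Real.log p)

/-- Generating function of `rho` as an arithmetic function. -/
noncomputable def genF : ArithmeticFunction (PowerSeries ℝ) :=
  ⟨fun n => if n = 0 then 0 else n.factorization.prod locF, by simp⟩

/-- `n ↦ exp(log n T)` as an arithmetic function. -/
noncomputable def genE : ArithmeticFunction (PowerSeries ℝ) :=
  ⟨fun n => if n = 0 then 0 else expS (Real.log n), by simp⟩

lemma genF_apply {n : ℕ} (h : n ≠ 0) : genF n = n.factorization.prod locF := by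
  simp [genF, h]

lemma genE_apply {n : ℕ} (h : n ≠ 0) : genE n = expS (Real.log n) := by
  simp [genE, h]

lemma genF_mult : genF.IsMultiplicative := by
  rw [ArithmeticFunction.IsMultiplicative.iff_ne_zero]
  refine ⟨by simp [genF_apply], ?_⟩
  intro m n hm hn hmn
  rw [genF_apply (mul_ne_zero hm hn), genF_apply hm, genF_apply hn,
    Nat.factorization_mul_of_coprime hmn]
  apply Finsupp.prod_add_index_of_disjoint
  simpa using hmn.disjoint_primeFactors

lemma genE_mult : genE.IsMultiplicative := by
  rw [ArithmeticFunction.IsMultiplicative.iff_ne_zero]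
  refine ⟨by simp [genE_apply, expS_zero], ?_⟩
  intro m n hm hn _
  rw [genE_apply (mul_ne_zero hm hn), genE_apply hm, genE_apply hn, ← expS_add, Nat.cast_mul,
    Real.log_mul (by exact_mod_cast hm) (by exact_mod_cast hn)]

lemma genF_sum (n : ℕ) (hn : n ≠ 0) : ∑ d ∈ n.divisors, genF d = expS (Real.log n) := by
  have key : genF * (ArithmeticFunction.zeta : ArithmeticFunction (PowerSeries ℝ)) = genE := by
    rw [ArithmeticFunction.IsMultiplicative.eq_iff_eq_on_prime_powers _
      (genF_mult.mul ArithmeticFunction.isMultiplicative_zeta.natCast) _ genE_mult]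
    intro p k hp
    rw [ArithmeticFunction.coe_mul_zeta_apply, Nat.sum_divisors_prime_pow hp,
      genE_apply (pow_ne_zero _ hp.ne_zero)]
    induction k with
    | zero => simp [genF_apply, expS_zero]
    | succ k ih =>
      rw [Finset.sum_range_succ, ih, genF_apply (pow_ne_zero _ hp.ne_zero),
        hp.factorization_pow, Finsupp.prod, Finsupp.support_single_ne_zero _ (Nat.succ_ne_zero k)]
      simp [locF]
  rw [← genE_apply hn, ← key, ArithmeticFunction.coe_mul_zeta_apply]

lemma rho_eq (lam n : ℕ) (hn : n ≠ 0) :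
    rho lam n = lam.factorial * PowerSeries.coeff lam (genF n) := by
  rw [genF_apply hn, Finsupp.prod, Nat.support_factorization,
    ← Finset.prod_coe_sort n.primeFactors (fun p => locF p (n.factorization p)),
    PowerSeries.coeff_prod, rho]
  congr 1
  refine Finset.sum_bij' (fun f _ => Finsupp.equivFunOnFinite.symm f) (fun f _ => (f : _ → ℕ))
    ?_ ?_ ?_ ?_ ?_
  · intro f hf
    simp only [Finset.mem_filter] at hf
    rw [Finset.mem_finsuppAntidiag]
    exact ⟨hf.2, Finset.subset_univ _⟩
  · intro f hf
    simp only [Finset.mem_finsuppAntidiag] at hf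
    simp only [Finset.mem_filter, Fintype.mem_piFinset, Finset.mem_range, Nat.lt_succ_iff]
    refine ⟨fun a => ?_, hf.1⟩
    rw [← hf.1]
    exact Finset.single_le_sum (fun _ _ => Nat.zero_le _) (Finset.mem_univ a)
  · intro f hf
    rfl
  · intro f hf
    ext; rfl
  · intro f hf
    refine Finset.prod_congr rfl fun p _ => ?_
    simp only [locF, map_sub, coeff_expS, mul_pow, Finsupp.equivFunOnFinite_symm_apply_apply]
    ring

lemma sum_rho (lam n : ℕ) (hn : n ≠ 0) :
    ∑ d ∈ n.divisors, rho lam d = Real.log n ^ lam := by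
  rw [Finset.sum_congr rfl fun d hd => rho_eq lam d (Nat.pos_of_mem_divisors hd).ne',
    ← Finset.mul_sum, ← map_sum, genF_sum n hn, coeff_expS]
  field_simp

section Lucas
variable {a₁ a₂ : ℤ} {u : ℕ → ℤ}

lemma luc_cop (hcop : IsCoprime a₁ a₂) (hu0 : u 0 = 0) (hu1 : u 1 = 1)
    (hrec : ∀ n : ℕ, u (n + 2) = a₁ * u (n + 1) + a₂ * u n) (n : ℕ) :
    IsCoprime (u n) (u (n + 1)) ∧ IsCoprime (u (n + 1)) a₂ := by
  induction n with
  | zero => simp [hu0, hu1, isCoprime_one_left, isCoprime_one_right]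
  | succ n ih =>
    obtain ⟨h1, h2⟩ := ih
    rw [show n + 1 + 1 = n + 2 from rfl, hrec]
    refine ⟨?_, ?_⟩
    · have : IsCoprime (u (n + 1)) (a₂ * u n) := h2.mul_right h1.symm
      have := this.add_mul_left_right a₁
      rwa [show a₂ * u n + u (n + 1) * a₁ = a₁ * u (n + 1) + a₂ * u n by ring] at this
    · exact (hcop.mul_left h2).add_mul_left_left (u n)

lemma luc_add_s17 (hu0 : u 0 = 0) (hu1 : u 1 = 1)
    (hrec : ∀ n : ℕ, u (n + 2) = a₁ * u (n + 1) + a₂ * u n) (m n : ℕ) :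
    u (m + n + 1) = u (m + 1) * u (n + 1) + a₂ * u m * u n := by
  induction n using Nat.twoStepInduction with
  | zero => simp [hu0, hu1]
  | one =>
    rw [show m + 1 + 1 = m + 2 from rfl, hrec, hrec 0]; simp [hu0, hu1]; ring
  | more n h1 h2 =>
    rw [show m + (n + 2) + 1 = (m + n + 1) + 2 by ring, hrec,
      show m + n + 1 + 1 = m + (n + 1) + 1 by ring, h2, h1, show n + 2 + 1 = n + 1 + 2 from rfl,
      hrec (n + 1), show n + 1 + 1 = n + 2 from rfl, hrec n]
    ring

lemma luc_dvd_add (hcop : IsCoprime a₁ a₂) (hu0 : u 0 = 0) (hu1 : u 1 = 1)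
    (hrec : ∀ n : ℕ, u (n + 2) = a₁ * u (n + 1) + a₂ * u n) {d : ℤ} {m : ℕ}
    (hm : d ∣ u m) (n : ℕ) : d ∣ u (m + n) ↔ d ∣ u n := by
  rcases n with _ | n
  · simp [hu0, hm]
  · rw [← add_assoc, luc_add_s17 hu0 hu1 hrec, dvd_add_left ((hm.mul_left a₂).mul_right _)]
    exact ⟨(IsCoprime.of_isCoprime_of_dvd_left (luc_cop hcop hu0 hu1 hrec m).1 hm).dvd_of_dvd_mul_left,
      fun h => h.mul_left _⟩

lemma luc_dvd_iff (hcop : IsCoprime a₁ a₂) (hu0 : u 0 = 0) (hu1 : u 1 = 1)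
    (hrec : ∀ n : ℕ, u (n + 2) = a₁ * u (n + 1) + a₂ * u n) (d n : ℕ) (hn : 0 < n) :
    (d : ℤ) ∣ u n ↔ zu u d ∣ n := by
  by_cases hne : {n : ℕ | 0 < n ∧ (d : ℤ) ∣ u n}.Nonempty
  · have hz : 0 < zu u d ∧ (d : ℤ) ∣ u (zu u d) := Nat.sInf_mem hne
    have hmul : ∀ k r : ℕ, (d : ℤ) ∣ u (zu u d * k + r) ↔ (d : ℤ) ∣ u r := by
      intro k r
      induction k with
      | zero => simp
      | succ k ih =>
        rw [show zu u d * (k + 1) + r = zu u d + (zu u d * k + r) by ring,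
          luc_dvd_add hcop hu0 hu1 hrec hz.2, ih]
    have h := hmul (n / zu u d) (n % zu u d)
    rw [Nat.div_add_mod] at h
    rw [h, Nat.dvd_iff_mod_eq_zero]
    constructor
    · intro h'
      by_contra h0
      exact absurd (Nat.sInf_le (show n % zu u d ∈ {n : ℕ | 0 < n ∧ (d : ℤ) ∣ u n} from
        ⟨Nat.pos_of_ne_zero h0, h'⟩)) (not_le.2 (Nat.mod_lt _ hz.1))
    · intro h'; simp [h', hu0]
  · have h0 : zu u d = 0 := by
      rw [zu, Set.not_nonempty_iff_eq_empty.1 hne, Nat.sInf_empty]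
    rw [h0, zero_dvd_iff]
    constructor
    · intro h; exact absurd ⟨n, hn, h⟩ hne
    · intro h; omega

end Lucas

/-- For every positive integer `λ` and real `x > 0`,
`Σ_{p ≤ x} (log g_u(p−1))^λ = Σ_{d ≤ x, (d,a₂)=1} ρ_λ(d)·π(x; ℓ(d), 1)`. -/
theorem statement17 (a₁ a₂ : ℤ) (hcop : IsCoprime a₁ a₂) (ha₂ : a₂ ≠ 0)
    (hΔ : a₁ ^ 2 + 4 * a₂ ≠ 0)
    (u : ℕ → ℤ) (hu0 : u 0 = 0) (hu1 : u 1 = 1)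
    (hrec : ∀ n : ℕ, u (n + 2) = a₁ * u (n + 1) + a₂ * u n)
    (hnd : ∀ α β : ℂ, α ^ 2 = (a₁ : ℂ) * α + (a₂ : ℂ) →
      β ^ 2 = (a₁ : ℂ) * β + (a₂ : ℂ) → α ≠ β → ∀ k : ℕ, 0 < k → (α / β) ^ k ≠ 1)
    (lam : ℕ) (hlam : 0 < lam) (x : ℝ) (hx : 0 < x) :
    ∑ p ∈ primesUpTo x, Real.log (gu u (p - 1) : ℝ) ^ lam =
      ∑ d ∈ (Finset.Icc 1 ⌊x⌋₊).filter (fun d : ℕ => Int.gcd (d : ℤ) a₂ = 1),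
        rho lam d * (primePiMod x (ellu u d) 1 : ℝ) := by
  have hrho : ∀ d : ℕ, rho lam d * (primePiMod x (ellu u d) 1 : ℝ) =
      ∑ p ∈ primesUpTo x, if p % (ellu u d) = 1 % (ellu u d) then rho lam d else 0 := by
    intro d
    rw [← Finset.sum_filter, Finset.sum_const, nsmul_eq_mul, mul_comm, primePiMod]
  rw [Finset.sum_congr rfl fun d _ => hrho d, Finset.sum_comm]
  refine Finset.sum_congr rfl fun p hp => ?_
  simp only [primesUpTo, Finset.mem_filter, Finset.mem_range] at hp
  obtain ⟨hpx, hp⟩ := hp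
  have hp2 := hp.two_le
  have hpos : 0 < p - 1 := by omega
  have hg : gu u (p - 1) ≠ 0 := by
    rw [gu, Ne, Int.gcd_eq_zero_iff]
    rintro ⟨h, -⟩
    have : p - 1 = 0 := by exact_mod_cast h
    omega
  rw [← sum_rho lam _ hg, ← Finset.sum_filter]
  refine Finset.sum_congr ?_ fun _ _ => rfl
  ext d
  have h1 : d ∣ gu u (p - 1) ↔ d ∣ p - 1 ∧ (d : ℤ) ∣ u (p - 1) := by
    rw [gu, Int.dvd_gcd_iff, Int.natCast_dvd_natCast]
  have h2 : p % ellu u d = 1 % ellu u d ↔ d ∣ gu u (p - 1) := by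
    rw [h1, luc_dvd_iff hcop hu0 hu1 hrec d _ hpos, ← Nat.lcm_dvd_iff, ← ellu,
      ← Nat.modEq_iff_dvd' (by omega)]
    exact eq_comm
  simp only [Nat.mem_divisors, Finset.mem_filter, Finset.mem_Icc, h2]
  constructor
  · rintro ⟨hd, -⟩
    refine ⟨⟨⟨Nat.pos_of_dvd_of_pos hd (Nat.pos_of_ne_zero hg), ?_⟩, ?_⟩, hd⟩
    · have := Nat.le_of_dvd hpos (h1.1 hd).1
      omega
    · rw [← Int.isCoprime_iff_gcd_eq_one]
      have := (luc_cop hcop hu0 hu1 hrec (p - 1 - 1)).2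
      rw [show p - 1 - 1 + 1 = p - 1 by omega] at this
      exact this.of_isCoprime_of_dvd_left (h1.1 hd).2
  · rintro ⟨-, hd⟩
    exact ⟨hd, hg⟩
end
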